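/- Let (X, w) be a tight Euclidean 2e-design on p concentric spheres in ℝⁿ. Then each layer X_i is at most an e-distance set, i.e. |{‖x − y‖ : x, y ∈ X_i, x ≠ y}| ≤ e, for 1 ≤ i ≤ p. -/

import Mathlib

/-!
On polynomials of degree at most `e`, the design identity says that
`B(f, g) = ∑ x ∈ X, w x * f x * g x` equals a positive combination of spherical averages of `f g`.
Hence `B` is invariant under linear isometries (`form_invariant`), and a polynomial vanishing on
`X` vanishes on the whole support `S` (`vanish`). By tightness, evaluation `Pol_e(S) → ℝ^X` is then
bijective, so there are `k x ∈ Pol_e(S)` for `x ∈ X` with `k x y = δ_{xy} / w x` on `X`. These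
represent point evaluation for `B`, and the invariance of `B` makes them equivariant:
`k (g x) (g z) = k x z` (`exists_kernel`).

Fix `u ≠ 0` in a layer. As `k u` is invariant under the stabilizer of `u`, it is on the sphere
through `u` a one-variable polynomial `A`, of degree at most `e`, in the inner product with `u`
(`exists_zonal`). Given `x ≠ y` in the layer, an isometry taking `x` to `u` shows that the inner
product of `x` and `y`, suitably normalized, is a root of `A`, while `A ≠ 0` since `k u u ≠ 0`.
So there are at most `e` inner products, hence at most `e` distances.
-/

open MeasureTheory Metric Finset
open scoped Classical RealInnerProductSpace

noncomputable section

/-- Euclidean `n`-space `ℝⁿ`. -/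
abbrev Euc (n : ℕ) := EuclideanSpace ℝ (Fin n)

/-- Evaluation of a multivariate polynomial at a point of `ℝⁿ`. -/
def evalPt {n : ℕ} (x : Euc n) (p : MvPolynomial (Fin n) ℝ) : ℝ :=
  MvPolynomial.eval (fun i => x i) p

/-- The normalized average (with respect to the `O(n)`-invariant surface measure,
i.e. the `(n-1)`-dimensional Hausdorff measure) of `f` over the sphere of radius `r`
centered at the origin; for `r = 0` it is `f 0`. -/
def sphAvg (n : ℕ) (r : ℝ) (f : Euc n → ℝ) : ℝ :=
  if r = 0 then f 0
  else ⨍ y in Metric.sphere (0 : Euc n) r, f y ∂(μH[(n : ℝ) - 1])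

/-- `(X, w)` is a Euclidean `t`-design in `ℝⁿ`:
`∑ᵢ (w(Xᵢ)/|Sᵢ|) ∫_{Sᵢ} f dσᵢ = ∑_{x ∈ X} w(x) f(x)` for all polynomials `f` of
degree at most `t`, where the `Sᵢ` are the concentric spheres supporting `X`. -/
def IsEuclideanDesign (n t : ℕ) (X : Finset (Euc n)) (w : Euc n → ℝ) : Prop :=
  ∀ p : MvPolynomial (Fin n) ℝ, p.totalDegree ≤ t →
    ∑ r ∈ X.image (fun x => ‖x‖),
        (∑ x ∈ X.filter (fun x => ‖x‖ = r), w x) * sphAvg n r (fun y => evalPt y p)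
      = ∑ x ∈ X, w x * evalPt x p

/-- Restriction of polynomials to a subset `S ⊆ ℝⁿ`, as a linear map. -/
def polyRestrict (n : ℕ) (S : Set (Euc n)) :
    MvPolynomial (Fin n) ℝ →ₗ[ℝ] (S → ℝ) where
  toFun p := fun x => evalPt (x : Euc n) p
  map_add' p q := by funext x; simp [evalPt]
  map_smul' c p := by funext x; simp [evalPt, MvPolynomial.smul_eval]

/-- `Pol_e(S)`: the space of restrictions to `S` of polynomials of total degree at most `e`. -/
def PolOn (n e : ℕ) (S : Set (Euc n)) : Submodule ℝ (S → ℝ) :=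
  (MvPolynomial.restrictTotalDegree (Fin n) ℝ e).map (polyRestrict n S)

/-- `dim Pol_e(S)`. -/
def dimPolOn (n e : ℕ) (S : Set (Euc n)) : ℕ := Module.finrank ℝ (PolOn n e S)

/-- The union of the concentric spheres (centered at the origin) supporting `X`. -/
def suppSpheres (n : ℕ) (X : Finset (Euc n)) : Set (Euc n) :=
  ⋃ r ∈ X.image (fun x => ‖x‖), Metric.sphere (0 : Euc n) r

/-- `(X, w)` is a tight Euclidean `2e`-design on `S` (the union of the concentric
spheres supporting `X`): it is a Euclidean `2e`-design with `|X| = dim Pol_e(S)`. -/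
def IsTightOnS (n e : ℕ) (X : Finset (Euc n)) (w : Euc n → ℝ) : Prop :=
  IsEuclideanDesign n (2 * e) X w ∧ X.card = dimPolOn n e (suppSpheres n X)

/-- `(X, w)` is a tight Euclidean `2e`-design: tight on `S` and moreover
`dim Pol_e(S) = dim Pol_e(ℝⁿ) = C(n+e, e)`. -/
def IsTightDesign (n e : ℕ) (X : Finset (Euc n)) (w : Euc n → ℝ) : Prop :=
  IsTightOnS n e X w ∧ dimPolOn n e (suppSpheres n X) = (n + e).choose e

/-! ### Polynomials of bounded degree -/

/-- Induction for properties `Q d p` of polynomials `p` with a degree bound `d`. -/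
theorem totalDegree_induct {n : ℕ} (Q : ℕ → MvPolynomial (Fin n) ℝ → Prop)
    (hC : ∀ c, Q 0 (MvPolynomial.C c))
    (hmono : ∀ d d' p, d ≤ d' → Q d p → Q d' p)
    (hadd : ∀ d p q, Q d p → Q d q → Q d (p + q))
    (hmul : ∀ d p i, Q d p → Q (d + 1) (p * MvPolynomial.X i))
    {e : ℕ} (p : MvPolynomial (Fin n) ℝ) (hp : p.totalDegree ≤ e) : Q e p := by
  have hmon : ∀ (s : Fin n →₀ ℕ) (a : ℝ),
      Q (MvPolynomial.monomial s a).totalDegree (MvPolynomial.monomial s a) := by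
    intro s a
    refine MvPolynomial.induction_on_monomial
      (motive := fun p => Q p.totalDegree p) ?_ ?_ s a
    · intro a
      simpa using hC a
    · intro p i hp
      by_cases h0 : p = 0
      · simpa [h0] using hC 0
      · rw [MvPolynomial.totalDegree_mul_of_isDomain h0 (MvPolynomial.X_ne_zero i),
          MvPolynomial.totalDegree_X]
        exact hmul _ _ _ hp
  rw [p.as_sum]
  refine Finset.sum_induction _ (Q e) (fun a b => hadd e a b)
    (hmono 0 e 0 (Nat.zero_le _) (by simpa using hC 0)) ?_
  intro s hs
  refine hmono _ _ _ ?_ (hmon s _)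
  rw [MvPolynomial.totalDegree_monomial _ (MvPolynomial.mem_support_iff.1 hs)]
  exact (MvPolynomial.le_totalDegree hs).trans hp

theorem evalPt_mul {n : ℕ} (x : Euc n) (p q : MvPolynomial (Fin n) ℝ) :
    evalPt x (p * q) = evalPt x p * evalPt x q := by simp [evalPt]

theorem evalPt_sub {n : ℕ} (x : Euc n) (p q : MvPolynomial (Fin n) ℝ) :
    evalPt x (p - q) = evalPt x p - evalPt x q := by simp [evalPt]

theorem continuous_evalPt {n : ℕ} (p : MvPolynomial (Fin n) ℝ) :
    Continuous (fun y : Euc n => evalPt y p) := by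
  unfold evalPt
  exact (MvPolynomial.continuous_eval p).comp (by fun_prop)

/-- Precomposition with a linear map does not raise the degree of a polynomial. -/
theorem exists_comp {n e : ℕ} (g : Euc n →ₗ[ℝ] Euc n) (p : MvPolynomial (Fin n) ℝ)
    (hp : p.totalDegree ≤ e) :
    ∃ q : MvPolynomial (Fin n) ℝ, q.totalDegree ≤ e ∧ ∀ y, evalPt y q = evalPt (g y) p := by
  refine totalDegree_induct (fun d p => ∃ q : MvPolynomial (Fin n) ℝ, q.totalDegree ≤ d ∧
    ∀ y, evalPt y q = evalPt (g y) p) ?_ ?_ ?_ ?_ p hp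
  · intro c
    exact ⟨MvPolynomial.C c, by simp, by simp [evalPt]⟩
  · rintro d d' p h ⟨q, hq, hq'⟩
    exact ⟨q, hq.trans h, hq'⟩
  · rintro d p p' ⟨q, hq, hq'⟩ ⟨q₂, hq₂, hq₂'⟩
    refine ⟨q + q₂, (MvPolynomial.totalDegree_add _ _).trans (max_le hq hq₂), fun y => ?_⟩
    have h1 := hq' y
    have h2 := hq₂' y
    simp only [evalPt, map_add] at *
    rw [h1, h2]
  · rintro d p i ⟨q, hq, hq'⟩
    refine ⟨q * ∑ j, MvPolynomial.C (g (EuclideanSpace.single j 1) i) * MvPolynomial.X j,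
      (MvPolynomial.totalDegree_mul _ _).trans (add_le_add hq ?_), fun y => ?_⟩
    · refine MvPolynomial.totalDegree_finsetSum_le fun j _ => ?_
      refine (MvPolynomial.totalDegree_mul _ _).trans ?_
      simp
    · have hy : g y = ∑ j, y j • g (EuclideanSpace.single j 1) := by
        conv_lhs => rw [← (EuclideanSpace.basisFun (Fin n) ℝ).sum_repr y]
        simp
      rw [evalPt_mul, evalPt_mul, hq']
      congr 1
      rw [hy]
      simp [evalPt, mul_comm]

/-- On the circle `{c u + s v : c ^ 2 + s ^ 2 = 1}` a polynomial of degree at most `e` equals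
`A(c) + s B(c)`, with `A` of degree at most `e`. -/
theorem exists_slice {n e : ℕ} (u v : Euc n) (p : MvPolynomial (Fin n) ℝ)
    (hp : p.totalDegree ≤ e) :
    ∃ A B : Polynomial ℝ, A.natDegree ≤ e ∧ ∀ c s : ℝ, s ^ 2 = 1 - c ^ 2 →
      evalPt (c • u + s • v) p = A.eval c + s * B.eval c := by
  -- The bound `deg B < e` is what keeps `deg A ≤ e` when `s ^ 2` is replaced by `1 - c ^ 2`.
  have key := totalDegree_induct (fun d p => ∃ A B : Polynomial ℝ,
    A ∈ Polynomial.degreeLT ℝ (d + 1) ∧ B ∈ Polynomial.degreeLT ℝ d ∧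
      ∀ c s : ℝ, s ^ 2 = 1 - c ^ 2 →
      evalPt (c • u + s • v) p = A.eval c + s * B.eval c) ?_ ?_ ?_ ?_ p hp
  · obtain ⟨A, B, hA, -, h⟩ := key
    refine ⟨A, B, ?_, h⟩
    rw [Polynomial.mem_degreeLT] at hA
    by_cases h0 : A = 0
    · simp [h0]
    · have := (Polynomial.natDegree_lt_iff_degree_lt h0).2 hA
      omega
  · intro a
    refine ⟨Polynomial.C a, 0, ?_, zero_mem _, fun c s _ => by simp [evalPt]⟩
    rw [Polynomial.mem_degreeLT]
    exact Polynomial.degree_C_le.trans_lt (by norm_num)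
  · rintro d d' p hd ⟨A, B, hA, hB, h⟩
    exact ⟨A, B, Polynomial.degreeLT_mono (by omega) hA, Polynomial.degreeLT_mono hd hB, h⟩
  · rintro d p q ⟨A, B, hA, hB, h⟩ ⟨A', B', hA', hB', h'⟩
    refine ⟨A + A', B + B', add_mem hA hA', add_mem hB hB', fun c s hs => ?_⟩
    have h1 := h c s hs
    have h2 := h' c s hs
    simp only [evalPt, map_add, Polynomial.eval_add] at *
    rw [h1, h2]
    ring
  · rintro d p i ⟨A, B, hA, hB, h⟩
    have hX : ∀ (k : ℕ) (P : Polynomial ℝ), P ∈ Polynomial.degreeLT ℝ k →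
        Polynomial.X * P ∈ Polynomial.degreeLT ℝ (k + 1) := by
      intro k P hP
      rw [Polynomial.mem_degreeLT] at *
      by_cases h0 : P = 0
      · simp [h0]
      · rw [← Polynomial.natDegree_lt_iff_degree_lt h0] at hP
        rw [← Polynomial.natDegree_lt_iff_degree_lt (by simpa using h0),
          Polynomial.natDegree_X_mul h0]
        omega
    refine ⟨u i • (Polynomial.X * A) + v i • (B - Polynomial.X * (Polynomial.X * B)),
      u i • (Polynomial.X * B) + v i • A, ?_, ?_, fun c s hs => ?_⟩
    · exact add_mem (Submodule.smul_mem _ _ (hX _ _ hA)) (Submodule.smul_mem _ _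
        (sub_mem (Polynomial.degreeLT_mono (by omega) hB) (hX _ _ (hX _ _ hB))))
    · exact add_mem (Submodule.smul_mem _ _ (hX _ _ hB)) (Submodule.smul_mem _ _ hA)
    · rw [evalPt_mul, h c s hs]
      simp [evalPt]
      linear_combination (v i * B.eval c) * hs

/-! ### Spherical averages -/

/-- The Hausdorff measure on a sphere is invariant under linear isometries. -/
theorem measurePreserving_isometry {n : ℕ} (g : Euc n ≃ₗᵢ[ℝ] Euc n) (d : ℝ) :
    MeasurePreserving g (μH[d] : Measure (Euc n)) μH[d] :=
  g.toIsometryEquiv.measurePreserving_hausdorffMeasure d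

theorem preimage_sphere {n : ℕ} (g : Euc n ≃ₗᵢ[ℝ] Euc n) (r : ℝ) :
    g ⁻¹' Metric.sphere (0 : Euc n) r = Metric.sphere 0 r := by
  ext x; simp

theorem sphAvg_comp {n : ℕ} (g : Euc n ≃ₗᵢ[ℝ] Euc n) (r : ℝ) (f : Euc n → ℝ) :
    sphAvg n r (fun y => f (g y)) = sphAvg n r f := by
  unfold sphAvg
  split_ifs with h
  · simp
  · rw [setAverage_eq, setAverage_eq]
    congr 1
    have := (measurePreserving_isometry g ((n : ℝ) - 1)).setIntegral_preimage_emb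
      g.toHomeomorph.measurableEmbedding f (Metric.sphere 0 r)
    rwa [preimage_sphere] at this

theorem sphAvg_nonneg {n : ℕ} (r : ℝ) (f : Euc n → ℝ) (hf : ∀ y, 0 ≤ f y) :
    0 ≤ sphAvg n r f := by
  unfold sphAvg
  split_ifs with h
  · exact hf 0
  · rw [setAverage_eq]
    exact smul_nonneg (by positivity) (integral_nonneg hf)

theorem sphAvg_one_le (n : ℕ) (r : ℝ) : sphAvg n r (fun _ => 1) ≤ 1 := by
  unfold sphAvg
  split_ifs with h
  · exact le_rfl
  · rw [setAverage_eq]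
    simp only [integral_const, smul_eq_mul, mul_one, measureReal_restrict_apply_univ]
    exact inv_mul_le_one

/-- Finiteness and positivity of the surface measure need no separate computation: they follow
from the design identity for the constant `1`, since the average of `1` is `1` or, over a set of
measure `0` or `∞`, the junk value `0`. -/
theorem measure_sphere_of_sphAvg_one {n : ℕ} {r : ℝ} (hr : r ≠ 0)
    (h : sphAvg n r (fun _ => 1) = 1) :
    (μH[(n : ℝ) - 1] : Measure (Euc n)) (Metric.sphere 0 r) ≠ 0 ∧
    (μH[(n : ℝ) - 1] : Measure (Euc n)) (Metric.sphere 0 r) ≠ ⊤ := by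
  rw [sphAvg, if_neg hr, setAverage_eq] at h
  constructor <;> intro h0 <;> simp [Measure.real, h0] at h

/-- A reflection carries any point to any other point of the same norm, fixing every point that
has the same inner product with both. -/
theorem exists_isometry {n : ℕ} (x y : Euc n) (h : ‖x‖ = ‖y‖) :
    ∃ g : Euc n ≃ₗᵢ[ℝ] Euc n, g x = y ∧ ∀ z, ⟪z, x⟫ = ⟪z, y⟫ → g z = z := by
  refine ⟨(ℝ ∙ (x - y))ᗮ.reflection, Submodule.reflection_sub h, fun z hz => ?_⟩
  rw [Submodule.reflection_eq_self_iff, Submodule.mem_orthogonal_singleton_iff_inner_left,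
    inner_sub_right, hz, sub_self]

/-- A relatively open subset of the sphere that is null is empty unless the whole sphere is null,
because finitely many of its rotated copies cover the sphere. -/
theorem eq_zero_of_measure_zero {n : ℕ} {r : ℝ} (f : Euc n → ℝ) (hf : Continuous f)
    (h0 : (μH[(n : ℝ) - 1] : Measure (Euc n)) (Metric.sphere 0 r) ≠ 0)
    (hz : (μH[(n : ℝ) - 1] : Measure (Euc n)) ({y | f y ≠ 0} ∩ Metric.sphere 0 r) = 0)
    (x : Euc n) (hx : ‖x‖ = r) : f x = 0 := by
  by_contra hfx
  apply h0
  refine (isCompact_sphere (0 : Euc n) r).measure_zero_of_nhdsWithin fun a ha => ?_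
  obtain ⟨g, hg, -⟩ := exists_isometry a x (by rw [hx]; simpa using ha)
  refine ⟨g ⁻¹' ({y | f y ≠ 0} ∩ Metric.sphere 0 r), ?_, ?_⟩
  · rw [Set.preimage_inter, preimage_sphere]
    refine Filter.inter_mem (mem_nhdsWithin_of_mem_nhds ?_) self_mem_nhdsWithin
    have ho : IsOpen (g ⁻¹' {y | f y ≠ 0}) :=
      (isOpen_ne_fun hf continuous_const).preimage g.continuous
    exact ho.mem_nhds (by simpa [hg] using hfx)
  · rw [(measurePreserving_isometry g _).measure_preimage_emb
      g.toHomeomorph.measurableEmbedding, hz]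

theorem eq_zero_of_sphAvg_sq {n : ℕ} {r : ℝ} (f : Euc n → ℝ) (hf : Continuous f)
    (h1 : sphAvg n r (fun _ => 1) = 1) (h : sphAvg n r (fun y => f y * f y) = 0)
    (x : Euc n) (hx : ‖x‖ = r) : f x = 0 := by
  by_cases hr : r = 0
  · have hx0 : x = 0 := by rwa [hr, norm_eq_zero] at hx
    simpa [sphAvg, hr, hx0] using h
  · obtain ⟨hpos, hfin⟩ := measure_sphere_of_sphAvg_one hr h1
    refine eq_zero_of_measure_zero f hf hpos ?_ x hx
    rw [sphAvg, if_neg hr, setAverage_eq, smul_eq_mul, mul_eq_zero, inv_eq_zero] at h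
    have hint : ∫ y in Metric.sphere (0 : Euc n) r, f y * f y ∂(μH[(n : ℝ) - 1]) = 0 := by
      refine h.resolve_left ?_
      rw [Measure.real, ENNReal.toReal_eq_zero_iff]
      tauto
    have hfm : IsFiniteMeasure
        ((μH[(n : ℝ) - 1] : Measure (Euc n)).restrict (Metric.sphere 0 r)) :=
      ⟨by simpa using hfin.lt_top⟩
    have hcont : Continuous fun y => f y * f y := hf.mul hf
    obtain ⟨C, hC⟩ := (isCompact_sphere (0 : Euc n) r).exists_bound_of_continuousOn
      hcont.continuousOn
    have hI : Integrable (fun y => f y * f y)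
        ((μH[(n : ℝ) - 1] : Measure (Euc n)).restrict (Metric.sphere 0 r)) :=
      Integrable.of_bound hcont.aestronglyMeasurable C
        ((ae_restrict_iff' Metric.isClosed_sphere.measurableSet).2 (Filter.Eventually.of_forall hC))
    rw [integral_eq_zero_iff_of_nonneg (fun y => mul_self_nonneg (f y)) hI] at hint
    have hm : MeasurableSet {y | f y ≠ 0} :=
      (isOpen_ne_fun hf continuous_const).measurableSet
    rw [← Measure.restrict_apply hm]
    rw [Filter.EventuallyEq, ae_iff] at hint
    simpa using hint

/-! ### The reproducing kernel of a tight design -/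

section design

variable {n e : ℕ} {X : Finset (Euc n)} {w : Euc n → ℝ}

theorem weight_pos (hw : ∀ x ∈ X, 0 < w x) {r : ℝ} (hr : r ∈ X.image (fun x => ‖x‖)) :
    0 < ∑ x ∈ X.filter (fun x => ‖x‖ = r), w x := by
  obtain ⟨x, hx, hxr⟩ := Finset.mem_image.1 hr
  exact Finset.sum_pos (fun y hy => hw y (Finset.mem_filter.1 hy).1)
    ⟨x, Finset.mem_filter.2 ⟨hx, hxr⟩⟩

theorem sphAvg_one (hw : ∀ x ∈ X, 0 < w x) (hd : IsEuclideanDesign n (2 * e) X w)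
    {r : ℝ} (hr : r ∈ X.image (fun x => ‖x‖)) : sphAvg n r (fun _ => 1) = 1 := by
  have h := hd 1 (by simp)
  simp only [evalPt, map_one, mul_one] at h
  rw [← Finset.sum_fiberwise_of_maps_to (t := X.image (fun x => ‖x‖))
    (g := fun x => ‖x‖) (fun x hx => Finset.mem_image_of_mem _ hx)] at h
  have h2 := (Finset.sum_eq_sum_iff_of_le (fun i hi =>
    mul_le_of_le_one_right (weight_pos hw hi).le (sphAvg_one_le n i))).1 h r hr
  exact (mul_eq_left₀ (weight_pos hw hr).ne').1 h2

/-- A polynomial of degree at most `e` that vanishes on `X` vanishes on the supporting spheres. -/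
theorem vanish (hw : ∀ x ∈ X, 0 < w x) (hd : IsEuclideanDesign n (2 * e) X w)
    (p : MvPolynomial (Fin n) ℝ) (hp : p.totalDegree ≤ e) (h0 : ∀ x ∈ X, evalPt x p = 0)
    (z : Euc n) (hz : ‖z‖ ∈ X.image (fun x => ‖x‖)) : evalPt z p = 0 := by
  have h := hd (p * p) ((MvPolynomial.totalDegree_mul _ _).trans (by omega))
  rw [Finset.sum_eq_zero (s := X) (fun x hx => by rw [evalPt_mul, h0 x hx]; simp)] at h
  have hnn : ∀ r, 0 ≤ sphAvg n r (fun y => evalPt y (p * p)) := fun r =>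
    sphAvg_nonneg r _ fun y => by rw [evalPt_mul]; exact mul_self_nonneg _
  have h2 := (Finset.sum_eq_zero_iff_of_nonneg
    (fun r hr => mul_nonneg (weight_pos hw hr).le (hnn r))).1 h _ hz
  have h3 := (mul_eq_zero.1 h2).resolve_left (weight_pos hw hz).ne'
  simp only [evalPt_mul] at h3
  exact eq_zero_of_sphAvg_sq _ (continuous_evalPt p) (sphAvg_one hw hd hz) h3 z rfl

/-- Tightness makes evaluation `Pol_e(S) → ℝ^X` bijective, so the indicator functions of the
points of `X` are polynomials of degree at most `e`. -/
theorem exists_indicator (hw : ∀ x ∈ X, 0 < w x) (ht : IsTightOnS n e X w) (x : Euc n) :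
    ∃ p : MvPolynomial (Fin n) ℝ, p.totalDegree ≤ e ∧
      ∀ y ∈ X, evalPt y p = if y = x then 1 else 0 := by
  obtain ⟨hd, hcard⟩ := ht
  have hmem : ∀ z : Euc n, ‖z‖ ∈ X.image (fun x => ‖x‖) ↔ z ∈ suppSpheres n X := by
    intro z
    simp [suppSpheres, eq_comm]
  let ev : PolOn n e (suppSpheres n X) →ₗ[ℝ] (X → ℝ) :=
    (LinearMap.funLeft ℝ ℝ (fun y : X => (⟨y.1, (hmem _).1
      (Finset.mem_image_of_mem _ y.2)⟩ : suppSpheres n X))).domRestrict _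
  have hinj : Function.Injective ev := by
    rw [← LinearMap.ker_eq_bot, LinearMap.ker_eq_bot']
    rintro ⟨f, p, hp, rfl⟩ hf
    ext z
    refine vanish hw hd p ((MvPolynomial.mem_restrictTotalDegree _ _ _).1 hp)
      (fun y hy => congrFun hf ⟨y, hy⟩) z.1 ((hmem _).2 z.2)
  have hfin : FiniteDimensional ℝ (PolOn n e (suppSpheres n X)) :=
    Module.Finite.of_injective ev hinj
  have hsurj := (LinearMap.injective_iff_surjective_of_finrank_eq_finrank
    (f := ev) (by rw [Module.finrank_fintype_fun_eq_card, Fintype.card_coe, hcard]; rfl)).1 hinj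
  obtain ⟨⟨f, p, hp, rfl⟩, hf⟩ := hsurj (fun y => if y.1 = x then 1 else 0)
  exact ⟨p, (MvPolynomial.mem_restrictTotalDegree _ _ _).1 hp,
    fun y hy => congrFun hf ⟨y, hy⟩⟩

/-- The bilinear form `∑ w(y) p(y) q(y)` on polynomials of degree at most `e` is invariant under
linear isometries, being a sum of spherical averages. -/
theorem form_invariant (hd : IsEuclideanDesign n (2 * e) X w) (g : Euc n ≃ₗᵢ[ℝ] Euc n)
    (p q p' q' : MvPolynomial (Fin n) ℝ) (hp : p.totalDegree ≤ e) (hq : q.totalDegree ≤ e)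
    (hp' : p'.totalDegree ≤ e) (hq' : q'.totalDegree ≤ e)
    (hpp : ∀ y, evalPt y p' = evalPt (g y) p) (hqq : ∀ y, evalPt y q' = evalPt (g y) q) :
    ∑ y ∈ X, w y * (evalPt y p' * evalPt y q') = ∑ y ∈ X, w y * (evalPt y p * evalPt y q) := by
  have h := hd (p * q) ((MvPolynomial.totalDegree_mul _ _).trans (by omega))
  have h' := hd (p' * q') ((MvPolynomial.totalDegree_mul _ _).trans (by omega))
  simp only [evalPt_mul] at h h'
  rw [← h, ← h']
  refine Finset.sum_congr rfl fun r _ => ?_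
  simp only [hpp, hqq]
  rw [sphAvg_comp g r (fun y => evalPt y p * evalPt y q)]

/-- The point evaluations at `x ∈ X` are represented by polynomials `k x` of degree at most `e`
with `k x y = 0` for `x ≠ y` in `X`, and `(x, z) ↦ k x z` is invariant under linear isometries. -/
theorem exists_kernel (hw : ∀ x ∈ X, 0 < w x) (ht : IsTightOnS n e X w) :
    ∃ k : Euc n → MvPolynomial (Fin n) ℝ, (∀ x, (k x).totalDegree ≤ e) ∧
      (∀ x ∈ X, evalPt x (k x) ≠ 0) ∧
      (∀ x ∈ X, ∀ y ∈ X, x ≠ y → evalPt y (k x) = 0) ∧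
      ∀ g : Euc n ≃ₗᵢ[ℝ] Euc n, ∀ x ∈ X, g x ∈ X → ∀ z, ‖z‖ ∈ X.image (fun x => ‖x‖) →
        evalPt (g z) (k (g x)) = evalPt z (k x) := by
  choose q hqdeg hq using fun x => exists_indicator hw ht x
  set k : Euc n → MvPolynomial (Fin n) ℝ := fun x => MvPolynomial.C (w x)⁻¹ * q x with hk
  have hev : ∀ x, ∀ y ∈ X, evalPt y (k x) = (w x)⁻¹ * if y = x then 1 else 0 := by
    intro x y hy
    rw [hk, evalPt_mul, hq x y hy]
    simp [evalPt]
  have hdeg : ∀ x, (k x).totalDegree ≤ e := fun x =>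
    (MvPolynomial.totalDegree_mul _ _).trans (by simpa using hqdeg x)
  have hrep : ∀ x ∈ X, ∀ f : MvPolynomial (Fin n) ℝ,
      ∑ y ∈ X, w y * (evalPt y (k x) * evalPt y f) = evalPt x f := by
    intro x hx f
    rw [Finset.sum_eq_single x]
    · rw [hev x x hx, if_pos rfl, mul_one, mul_inv_cancel_left₀ (hw x hx).ne']
    · intro y hy hyx
      rw [hev x y hy, if_neg hyx]
      simp
    · exact fun h => absurd hx h
  refine ⟨k, hdeg, ?_, ?_, ?_⟩
  · intro x hx
    rw [hev x x hx]
    simpa using (hw x hx).ne'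
  · intro x _ y hy hxy
    rw [hev x y hy, if_neg hxy.symm, mul_zero]
  · intro g x hx hgx z hz
    obtain ⟨k', hk'deg, hk'⟩ := exists_comp g.toLinearEquiv.toLinearMap (k (g x)) (hdeg _)
    have hk'' : ∀ y, evalPt y k' = evalPt (g y) (k (g x)) := fun y => hk' y
    -- The difference `d` is orthogonal to all polynomials of degree at most `e`, hence to itself.
    set d := k' - k x with hdd
    have hddeg : d.totalDegree ≤ e :=
      (MvPolynomial.totalDegree_sub _ _).trans (max_le hk'deg (hdeg x))
    obtain ⟨d', hd'deg, hd'⟩ := exists_comp g.symm.toLinearEquiv.toLinearMap d hddeg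
    have hd'' : ∀ y, evalPt y d' = evalPt (g.symm y) d := hd'
    have h1 := form_invariant ht.1 g (k (g x)) d' k' d (hdeg _) hd'deg hk'deg hddeg hk''
      (fun y => by rw [hd'']; simp)
    rw [hrep _ hgx, hd'', LinearIsometryEquiv.symm_apply_apply] at h1
    have h2 : ∑ y ∈ X, w y * (evalPt y d * evalPt y d) = 0 := by
      calc ∑ y ∈ X, w y * (evalPt y d * evalPt y d)
          = ∑ y ∈ X, w y * (evalPt y k' * evalPt y d)
            - ∑ y ∈ X, w y * (evalPt y (k x) * evalPt y d) := by
            rw [← Finset.sum_sub_distrib]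
            refine Finset.sum_congr rfl fun y _ => ?_
            have hyd : evalPt y d = evalPt y k' - evalPt y (k x) := evalPt_sub _ _ _
            rw [hyd]
            ring
        _ = 0 := by rw [h1, hrep x hx d, sub_self]
    have h4 : ∀ y ∈ X, evalPt y d = 0 := by
      intro y hy
      have := (Finset.sum_eq_zero_iff_of_nonneg (fun y hy =>
        mul_nonneg (hw y hy).le (mul_self_nonneg _))).1 h2 y hy
      simpa [(hw y hy).ne'] using this
    have h5 := vanish hw ht.1 d hddeg h4 z hz
    rw [hdd, evalPt_sub, hk''] at h5
    linarith

end design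

/-! ### Zonality and the distance bound -/

/-- For `u ≠ 0` there is `v ⊥ u` such that, whenever `z` on the sphere through `u` has
`u`-component `c u`, both points `c u + s v` with `s ^ 2 = 1 - c ^ 2` lie on that sphere. If the
orthogonal complement of `u` is nonzero, any `v` in it of norm `‖u‖` works; otherwise `c = ±1`
and `v = 0` works. -/
theorem exists_meridian {n : ℕ} (u : Euc n) (hu : u ≠ 0) :
    ∃ v : Euc n, ⟪u, v⟫ = 0 ∧ ∀ z : Euc n, ‖z‖ = ‖u‖ →
      ∀ c s : ℝ, ⟪u, z⟫ = c * ‖u‖ ^ 2 → s ^ 2 = 1 - c ^ 2 → ‖c • u + s • v‖ = ‖u‖ := by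
  have hun : ‖u‖ ≠ 0 := norm_ne_zero_iff.2 hu
  by_cases h : ∃ v : Euc n, v ≠ 0 ∧ ⟪u, v⟫ = 0
  · obtain ⟨v, hv, huv⟩ := h
    have hvn : ‖v‖ ≠ 0 := norm_ne_zero_iff.2 hv
    refine ⟨(‖u‖ / ‖v‖) • v, by rw [inner_smul_right, huv, mul_zero], ?_⟩
    intro z _ c s _ hs
    rw [← sq_eq_sq₀ (norm_nonneg _) (norm_nonneg _), norm_add_sq_real, norm_smul, norm_smul,
      norm_smul, inner_smul_left, inner_smul_right, inner_smul_right, huv]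
    simp only [Real.norm_eq_abs, mul_pow, sq_abs, norm_div, div_pow, hs]
    field_simp
    ring
  · push Not at h
    refine ⟨0, inner_zero_right _, ?_⟩
    intro z hz c s hc _
    have h0 : z - c • u = 0 := by
      by_contra hne
      refine h _ hne ?_
      rw [inner_sub_right, inner_smul_right, real_inner_self_eq_norm_sq, hc, sub_self]
    rw [smul_zero, add_zero, ← sub_eq_zero.1 h0, hz]

/-- A polynomial of degree at most `e` that is invariant under the isometries fixing `u` is, on
the sphere through `u`, a one-variable polynomial of degree at most `e` in `⟪u, z⟫ / ‖u‖ ^ 2`. -/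
theorem exists_zonal {n e : ℕ} (u : Euc n) (hu : u ≠ 0) (p : MvPolynomial (Fin n) ℝ)
    (hp : p.totalDegree ≤ e)
    (hinv : ∀ g : Euc n ≃ₗᵢ[ℝ] Euc n, g u = u → ∀ z, ‖z‖ = ‖u‖ → evalPt (g z) p = evalPt z p) :
    ∃ A : Polynomial ℝ, A.natDegree ≤ e ∧ ∀ z : Euc n, ‖z‖ = ‖u‖ →
      evalPt z p = A.eval (⟪u, z⟫ / ‖u‖ ^ 2) := by
  have hun : ‖u‖ ≠ 0 := norm_ne_zero_iff.2 hu
  obtain ⟨v, huv, hv⟩ := exists_meridian u hu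
  obtain ⟨A, B, hA, hAB⟩ := exists_slice u v p hp
  refine ⟨A, hA, fun z hz => ?_⟩
  set c := ⟪u, z⟫ / ‖u‖ ^ 2 with hc
  have hcu : ⟪u, z⟫ = c * ‖u‖ ^ 2 := by rw [hc]; field_simp
  have hc1 : 0 ≤ 1 - c ^ 2 := by
    have := abs_real_inner_le_norm u z
    rw [hz, hcu, abs_mul, abs_of_nonneg (sq_nonneg ‖u‖), ← sq] at this
    have h2 : |c| ≤ 1 := le_of_mul_le_mul_right (by simpa using this) (by positivity : 0 < ‖u‖ ^ 2)
    have := sq_le_one_iff_abs_le_one c |>.2 h2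
    linarith
  have key : ∀ s : ℝ, s ^ 2 = 1 - c ^ 2 → evalPt z p = A.eval c + s * B.eval c := by
    intro s hs
    rw [← hAB c s hs]
    obtain ⟨g, hg, hgf⟩ := exists_isometry z (c • u + s • v) (by rw [hz, hv z hz c s hcu hs])
    rw [← hg]
    refine (hinv g (hgf u ?_) z hz).symm
    rw [inner_add_right, inner_smul_right, inner_smul_right, huv, real_inner_self_eq_norm_sq, hcu]
    ring
  -- Average over the two points `c u ± s v`.
  have h1 := key _ (Real.sq_sqrt hc1)
  have h2 := key (-Real.sqrt (1 - c ^ 2)) (by rw [neg_sq, Real.sq_sqrt hc1])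
  linarith

/-- If `(X, w)` is a tight Euclidean `2e`-design on its concentric spheres,
then each layer `Xᵢ` is at most an `e`-distance set. -/
theorem layers_are_at_most_e_distance_sets_of_tight (n e : ℕ)
    (X : Finset (Euc n)) (w : Euc n → ℝ)
    (hne : X.Nonempty) (hw : ∀ x ∈ X, 0 < w x)
    (ht : IsTightOnS n e X w) :
    ∀ r : ℝ,
      ({d : ℝ | ∃ x ∈ X, ∃ y ∈ X, ‖x‖ = r ∧ ‖y‖ = r ∧ x ≠ y ∧ d = ‖x - y‖}).ncard ≤ e := by
  intro r
  obtain ⟨k, hkdeg, hkpos, hk0, hkinv⟩ := exists_kernel hw ht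
  by_cases hX : ∃ u ∈ X, ‖u‖ = r ∧ u ≠ 0
  · obtain ⟨u, hu, rfl, hu0⟩ := hX
    have hun : ‖u‖ ≠ 0 := norm_ne_zero_iff.2 hu0
    obtain ⟨A, hA, hAz⟩ := exists_zonal u hu0 (k u) (hkdeg u) (fun g hg z hz => by
      have := hkinv g u hu (by rwa [hg]) z (by rw [hz]; exact Finset.mem_image_of_mem _ hu)
      rwa [hg] at this)
    have hA0 : A ≠ 0 := by
      rintro rfl
      exact hkpos u hu (by simpa using hAz u rfl)
    -- Points of norm `‖u‖` whose inner product is `c ‖u‖ ^ 2` are at distance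
    -- `√(2 ‖u‖ ^ 2 (1 - c))`, and `c` is a root of `A`.
    have hsub : {d : ℝ | ∃ x ∈ X, ∃ y ∈ X, ‖x‖ = ‖u‖ ∧ ‖y‖ = ‖u‖ ∧ x ≠ y ∧ d = ‖x - y‖} ⊆
        (A.roots.toFinset.image fun c => Real.sqrt (2 * ‖u‖ ^ 2 * (1 - c)) : Finset ℝ) := by
      rintro d ⟨x, hx, y, hy, hxu, hyu, hxy, rfl⟩
      obtain ⟨g, hg, -⟩ := exists_isometry x u hxu
      have hroot : A.eval (⟪u, g y⟫ / ‖u‖ ^ 2) = 0 := by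
        rw [← hAz (g y) (by rw [g.norm_map, hyu]), ← hk0 x hx y hy hxy,
          ← hkinv g x hx (by rwa [hg]) y (Finset.mem_image_of_mem _ hy), hg]
      rw [Finset.mem_coe, Finset.mem_image]
      refine ⟨_, by rw [Multiset.mem_toFinset, Polynomial.mem_roots hA0]; exact hroot, ?_⟩
      rw [← Real.sqrt_sq (norm_nonneg (x - y)), norm_sub_sq_real, hxu, hyu]
      congr 1
      have hin : ⟪u, g y⟫ = ⟪x, y⟫ := by rw [← hg, g.inner_map_map]
      rw [hin]
      field_simp
      ring
    refine (Set.ncard_le_ncard hsub (Finset.finite_toSet _)).trans ?_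
    rw [Set.ncard_coe_finset]
    exact Finset.card_image_le.trans ((Multiset.toFinset_card_le _).trans
      ((Polynomial.card_roots' A).trans hA))
  · push Not at hX
    have hempty : {d : ℝ | ∃ x ∈ X, ∃ y ∈ X, ‖x‖ = r ∧ ‖y‖ = r ∧ x ≠ y ∧ d = ‖x - y‖} = ∅ := by
      ext d
      simp only [Set.mem_ofPred_eq, Set.mem_empty_iff_false, iff_false]
      rintro ⟨x, hx, y, hy, hxr, hyr, hxy, -⟩
      exact hxy (by rw [hX x hx hxr, hX y hy hyr])
    rw [hempty, Set.ncard_empty]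
    exact Nat.zero_le _

end
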